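/- For all integers n > k ≥ 3 and 2 ≤ s ≤ C(k,2) + 1, one has F⁽²⁾(n; k, s) ≥ C(n,2) / f(n, k, C(k,2) − s + 2). (Indeed, in a (k, C(k,2)−s+2)-coloring of K_n no set of k vertices can contain s edges of the same color, so some color class is a graph with at least C(n,2)/f(n,k,C(k,2)−s+2) edges in which no k vertices induce s edges.) -/

import Mathlib

namespace EG

/-- The set of (non-diagonal) edges inside a vertex set `S`. -/
def edgesOf {V : Type} [DecidableEq V] (S : Finset V) : Finset (Sym2 V) :=
  S.sym2.filter fun e => ¬ e.IsDiag

/-- `c` is a `(p,q)`-coloring of `K_n` (with `k` colors): every set of `p` vertices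
spans edges of at least `q` distinct colors. -/
def IsPQColoring (n p q k : ℕ) (c : Sym2 (Fin n) → Fin k) : Prop :=
  ∀ S : Finset (Fin n), S.card = p → q ≤ ((edgesOf S).image c).card

/-- The generalized Ramsey number `f(n,p,q)`: the minimum number of colors in a
`(p,q)`-coloring of `K_n`. -/
noncomputable def genRamsey (n p q : ℕ) : ℕ :=
  sInf { k | ∃ c : Sym2 (Fin n) → Fin k, IsPQColoring n p q k c }

/-- `F²(n;k,s)`: the smallest number `m` of edges such that every simple graph on `n`
vertices with `m` edges contains `k` vertices inducing at least `s` edges. -/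
noncomputable def F2 (n k s : ℕ) : ℕ :=
  sInf { m | ∀ E : Finset (Sym2 (Fin n)), (∀ e ∈ E, ¬ e.IsDiag) → E.card = m →
    ∃ S : Finset (Fin n), S.card = k ∧ s ≤ (E ∩ S.sym2).card }

/-- The coloring `c` has a monochromatic clique on the vertex set `S`. -/
def IsMonoClique {n k : ℕ} (c : Sym2 (Fin n) → Fin k) (S : Finset (Fin n)) : Prop :=
  ∃ col : Fin k, ∀ e ∈ edgesOf S, c e = col

/-- The `k`-color diagonal Ramsey number `R_k(p)`: the least `n` such that every
`k`-coloring of the edges of `K_n` contains a monochromatic `p`-clique. -/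
noncomputable def multiRamsey (k p : ℕ) : ℕ :=
  sInf { n | ∀ c : Sym2 (Fin n) → Fin k, ∃ S : Finset (Fin n), S.card = p ∧ IsMonoClique c S }


theorem card_edgesOf {V : Type} [DecidableEq V] (S : Finset V) :
    (edgesOf S).card = S.card.choose 2 := by
  rw [← Sym2.card_image_offDiag]
  congr 1
  ext e
  induction e using Sym2.ind with
  | _ x y =>
    simp only [edgesOf, Finset.mem_filter, Finset.mk_mem_sym2_iff, Sym2.mk_isDiag_iff,
      Finset.mem_image, Finset.mem_offDiag, Prod.exists, Function.uncurry_apply_pair, Sym2.eq_iff]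
    constructor
    · rintro ⟨⟨hx, hy⟩, hxy⟩
      exact ⟨x, y, ⟨hx, hy, hxy⟩, Or.inl ⟨rfl, rfl⟩⟩
    · rintro ⟨a, b, ⟨ha, hb, hab⟩, (⟨rfl, rfl⟩ | ⟨rfl, rfl⟩)⟩
      · exact ⟨⟨ha, hb⟩, hab⟩
      · exact ⟨⟨hb, ha⟩, fun h => hab h.symm⟩

theorem F2_mem (n k s : ℕ) (E : Finset (Sym2 (Fin n))) (hE : ∀ e ∈ E, ¬ e.IsDiag)
    (hc : E.card = F2 n k s) :
    ∃ S : Finset (Fin n), S.card = k ∧ s ≤ (E ∩ S.sym2).card := by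
  have hne : { m | ∀ E : Finset (Sym2 (Fin n)), (∀ e ∈ E, ¬ e.IsDiag) → E.card = m →
      ∃ S : Finset (Fin n), S.card = k ∧ s ≤ (E ∩ S.sym2).card }.Nonempty := by
    refine ⟨Fintype.card (Sym2 (Fin n)) + 1, fun E _ h => ?_⟩
    have := Finset.card_le_univ E
    omega
  exact Nat.sInf_mem hne E hE hc

theorem class_card_le (n k s N : ℕ) (hs1 : 2 ≤ s) (hs2 : s ≤ k.choose 2 + 1)
    (c : Sym2 (Fin n) → Fin N) (hc : IsPQColoring n k (k.choose 2 + 2 - s) N c) (i : Fin N) :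
    ((edgesOf (Finset.univ : Finset (Fin n))).filter fun e => c e = i).card ≤ F2 n k s := by
  by_contra! hlt
  obtain ⟨E, hE, hEc⟩ := Finset.exists_subset_card_eq hlt.le
  have hEd : ∀ e ∈ E, ¬ e.IsDiag ∧ c e = i := by
    intro e he
    have := hE he
    simp only [edgesOf, Finset.mem_filter] at this
    exact ⟨this.1.2, this.2⟩
  obtain ⟨S, hS, hsS⟩ := F2_mem n k s E (fun e he => (hEd e he).1) hEc
  have h1 := hc S hS
  have hsub : E ∩ S.sym2 ⊆ edgesOf S := by
    intro e he
    rw [Finset.mem_inter] at he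
    exact Finset.mem_filter.2 ⟨he.2, (hEd e he.1).1⟩
  have h2 : (edgesOf S).image c ⊆ {i} ∪ (edgesOf S \ (E ∩ S.sym2)).image c := by
    intro x hx
    obtain ⟨e, he, rfl⟩ := Finset.mem_image.1 hx
    by_cases h : e ∈ E ∩ S.sym2
    · exact Finset.mem_union_left _
        (Finset.mem_singleton.2 (hEd e (Finset.mem_inter.1 h).1).2)
    · exact Finset.mem_union_right _
        (Finset.mem_image_of_mem _ (Finset.mem_sdiff.2 ⟨he, h⟩))
  have h3 := Finset.card_le_card h2
  have h4 := Finset.card_union_le {i} ((edgesOf S \ (E ∩ S.sym2)).image c)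
  have h5 := Finset.card_image_le (s := edgesOf S \ (E ∩ S.sym2)) (f := c)
  have h6 := Finset.card_sdiff_add_card_eq_card hsub
  rw [card_edgesOf, hS] at h6
  rw [Finset.card_singleton] at h4
  omega

/-- `F²(n;k,s) ≥ C(n,2) / f(n, k, C(k,2) − s + 2)`. -/
theorem F2_ge_choose_div_genRamsey (n k s : ℕ) (hk : 3 ≤ k) (hn : k < n)
    (hs1 : 2 ≤ s) (hs2 : s ≤ k.choose 2 + 1) :
    (n.choose 2 : ℝ) / (genRamsey n k (k.choose 2 + 2 - s) : ℝ) ≤ (F2 n k s : ℝ) := by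
  rcases Nat.eq_zero_or_pos (genRamsey n k (k.choose 2 + 2 - s)) with h0 | hpos
  · rw [h0]; simp
  have hmem := Nat.sInf_mem (Nat.nonempty_of_pos_sInf hpos)
  change ∃ c : Sym2 (Fin n) → Fin (genRamsey n k (k.choose 2 + 2 - s)),
    IsPQColoring n k (k.choose 2 + 2 - s) _ c at hmem
  obtain ⟨c, hc⟩ := hmem
  rw [div_le_iff₀ (by exact_mod_cast hpos)]
  have h := Finset.card_le_mul_card_image_of_maps_to
    (s := edgesOf (Finset.univ : Finset (Fin n))) (t := Finset.univ) (f := c)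
    (fun _ _ => Finset.mem_univ _) (F2 n k s)
    (fun i _ => class_card_le n k s _ hs1 hs2 c hc i)
  rw [card_edgesOf, Finset.card_univ, Finset.card_univ, Fintype.card_fin, Fintype.card_fin] at h
  exact_mod_cast h

end EG
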